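/- arXiv:1303.4172 — 2 statements merged into one kernel-verified Lean document; each statement's English description precedes it below -/
import Mathlib

section
/- Let ℓ ∈ 𝕃 and let A ∈ ℝ^{m×n} have every entry in [−1,1]. Let λ ∈ ℝⁿ, let v = s·e_j (with s ∈ {±1} and e_j a standard basis vector) satisfy ∇L(Aλ)ᵀAv = −‖Aᵀ∇L(Aλ)‖_∞, set γ̂ := ‖Aᵀ∇L(Aλ)‖_∞/‖∇L(Aλ)‖₁ and C := C_ℓ(ℓ⁻¹(m·L(Aλ))). If α* ≥ 0 is a minimizer of α ↦ L(A(λ + α·v)), then γ̂/C⁴ ≤ α*. In particular, for any shrinkage ν ∈ (0,1], the quadratic-upper-bound step ν·γ̂/C⁴ is at most the shrunk optimal step ν·α*. -/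
open Real Finset

noncomputable section

/-- The property that `C` is a valid curvature constant at level `z`:
`C ≥ 1` and `C⁻¹ ≤ eˣ / ℓ⁽ⁱ⁾(x) ≤ C` for all `x ≤ z` and `i ∈ {0,1,2}`. -/
def CBound (ℓ : ℝ → ℝ) (z C : ℝ) : Prop :=
  1 ≤ C ∧ ∀ x ≤ z, ∀ i ≤ 2,
    C⁻¹ ≤ Real.exp x / iteratedDeriv i ℓ x ∧ Real.exp x / iteratedDeriv i ℓ x ≤ C

/-- `C_ℓ(z)`: the least valid curvature constant at level `z`. -/
def Cconst (ℓ : ℝ → ℝ) (z : ℝ) : ℝ := sInf {C : ℝ | CBound ℓ z C}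

/-- Membership in the class `𝕃`: positive, twice continuously differentiable,
strictly convex, and `C_ℓ(z) < ∞` (i.e. some valid constant exists) for every `z`. -/
def MemL (ℓ : ℝ → ℝ) : Prop :=
  (∀ x, 0 < ℓ x) ∧ ContDiff ℝ 2 ℓ ∧ StrictConvexOn ℝ Set.univ ℓ ∧
    ∀ z : ℝ, ∃ C : ℝ, CBound ℓ z C

/-- Membership in `𝕃_∞`: in `𝕃` and moreover `C_ℓ(z) → 1` as `z → −∞`. -/
def MemLinf (ℓ : ℝ → ℝ) : Prop :=
  MemL ℓ ∧ Filter.Tendsto (Cconst ℓ) Filter.atBot (nhds 1)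

variable {m n : ℕ}

/-- The empirical risk `L(Aλ) = (1/m) Σᵢ ℓ((Aλ)ᵢ)`. -/
def LL (ℓ : ℝ → ℝ) (A : Matrix (Fin m) (Fin n) ℝ) (lam : Fin n → ℝ) : ℝ :=
  (∑ i, ℓ (A.mulVec lam i)) / m

/-- The gradient vector `∇L(Aλ)`, with `i`-th entry `ℓ'((Aλ)ᵢ)/m`. -/
def gradL (ℓ : ℝ → ℝ) (A : Matrix (Fin m) (Fin n) ℝ) (lam : Fin n → ℝ) : Fin m → ℝ :=
  fun i => deriv ℓ (A.mulVec lam i) / m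

/-- `‖Aᵀ ∇L(Aλ)‖_∞`. -/
def gInf (ℓ : ℝ → ℝ) (A : Matrix (Fin m) (Fin n) ℝ) (lam : Fin n → ℝ) : ℝ :=
  ⨆ j : Fin n, |∑ i, gradL ℓ A lam i * A i j|

/-- `‖∇L(Aλ)‖₁`. -/
def gOne (ℓ : ℝ → ℝ) (A : Matrix (Fin m) (Fin n) ℝ) (lam : Fin n → ℝ) : ℝ :=
  ∑ i, |gradL ℓ A lam i|

/-- `γ̂ = ‖Aᵀ∇L(Aλ)‖_∞ / ‖∇L(Aλ)‖₁`. -/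
def gammaHat (ℓ : ℝ → ℝ) (A : Matrix (Fin m) (Fin n) ℝ) (lam : Fin n → ℝ) : ℝ :=
  gInf ℓ A lam / gOne ℓ A lam

/-- `C = C_ℓ(ℓ⁻¹(m · L(Aλ)))`. -/
def Cstep (ℓ : ℝ → ℝ) (A : Matrix (Fin m) (Fin n) ℝ) (lam : Fin n → ℝ) : ℝ :=
  Cconst ℓ (Function.invFun ℓ ((m : ℝ) * LL ℓ A lam))

/-- The (minimum `l¹`) margin `M(Aλ) = min_k (−(Aλ)_k) / ‖λ‖₁`. -/
def margin (A : Matrix (Fin m) (Fin n) ℝ) (lam : Fin n → ℝ) : ℝ :=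
  ⨅ k : Fin m, (-(A.mulVec lam k)) / (∑ j, |lam j|)

/-- The maximum margin `γ = max_{‖λ‖₁=1} min_i (−(Aλ)ᵢ)`. -/
def gammaMax (A : Matrix (Fin m) (Fin n) ℝ) : ℝ :=
  sSup {r : ℝ | ∃ lam : Fin n → ℝ, (∑ j, |lam j|) = 1 ∧ r = ⨅ i : Fin m, -(A.mulVec lam i)}

/-- Boosting iterates: `λ₀ = 0`, `λ_t = λ_{t-1} + α_t • v_t` where `v_t` is a signed
standard basis vector satisfying `∇L(Aλ_{t-1})ᵀ A v_t = −‖Aᵀ∇L(Aλ_{t-1})‖_∞`. -/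
def IsBoostSeq (ℓ : ℝ → ℝ) (A : Matrix (Fin m) (Fin n) ℝ)
    (lam : ℕ → Fin n → ℝ) (α : ℕ → ℝ) (v : ℕ → Fin n → ℝ) : Prop :=
  lam 0 = 0 ∧
  (∀ t : ℕ, 1 ≤ t → lam t = lam (t-1) + α t • v t) ∧
  (∀ t : ℕ, 1 ≤ t → ∃ s : ℝ, (s = 1 ∨ s = -1) ∧ ∃ j : Fin n, v t = s • (Pi.single j (1:ℝ) : Fin n → ℝ)) ∧
  (∀ t : ℕ, 1 ≤ t →
    ∑ i, gradL ℓ A (lam (t-1)) i * A.mulVec (v t) i = - gInf ℓ A (lam (t-1)))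

/-- The quantity `Υ_ν(γ)`. -/
def Upsilon (ν γ : ℝ) : ℝ :=
  ((2/ν) * Real.log 2 - (2/ν) * Real.log ((1+γ) ^ (1-ν) + (1-γ) ^ (1-ν))
      - Real.log (1-γ^2)) /
    (Real.log (1+γ) - Real.log (1-γ))

/-!
Write `φ(t) = m · L(A(λ + t v))`. Since `φ` is convex and minimized at `α*` over `[0, ∞)`, it stays
below `φ(0) = ℓ(z)` on `[0, α*]`, where `z = ℓ⁻¹(m · L(Aλ))`. As `ℓ` is positive and increasing, no
coordinate of `A(λ + t v)` exceeds `z` there, so `ℓ`, `ℓ'` and `ℓ''` all agree with `exp` on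
these coordinates up to the factor `C = C_ℓ(z)`. Comparing `ℓ''` with `ℓ`, and `ℓ` with `ℓ'`, gives
`φ'' ≤ C² φ ≤ C² φ(0) ≤ C⁴ ‖m ∇L(Aλ)‖₁`. The mean value inequality for `φ'`, together with
`φ'(α*) ≥ 0`, then yields `-φ'(0) ≤ C⁴ ‖m ∇L(Aλ)‖₁ α*`.
-/

theorem nonneg_of_hasDerivAt_of_isMinOn_Ici {f : ℝ → ℝ} {f' a b : ℝ} (hab : a ≤ b)
    (hf : HasDerivAt f f' b) (hmin : IsMinOn f (Set.Ici a) b) : 0 ≤ f' := by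
  have hcone : (1 : ℝ) ∈ posTangentConeAt (Set.Ici a) b := by
    apply mem_posTangentConeAt_of_segment_subset
    rw [segment_eq_Icc (by linarith)]
    exact fun t ht => hab.trans ht.1
  simpa using hmin.localize.hasFDerivWithinAt_nonneg hf.hasFDerivAt.hasFDerivWithinAt hcone

theorem neg_deriv_le_mul_of_isMinOn_Ici {f f' f'' : ℝ → ℝ} {a b K : ℝ} (hab : a ≤ b)
    (hf : HasDerivAt f (f' b) b) (hf' : ∀ t ∈ Set.Icc a b, HasDerivAt f' (f'' t) t)
    (hK : ∀ t ∈ Set.Icc a b, f'' t ≤ K) (hmin : IsMinOn f (Set.Ici a) b) :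
    -f' a ≤ K * (b - a) := by
  have hstationary : 0 ≤ f' b := nonneg_of_hasDerivAt_of_isMinOn_Ici hab hf hmin
  have hmvt : f' b - f' a ≤ K * (b - a) :=
    (convex_Icc a b).image_sub_le_mul_sub_of_deriv_le
      (fun t ht => (hf' t ht).continuousAt.continuousWithinAt)
      (fun t ht => (hf' t (interior_subset ht)).differentiableAt.differentiableWithinAt)
      (fun t ht => (hf' t (interior_subset ht)).deriv ▸ hK t (interior_subset ht))
      a (Set.left_mem_Icc.2 hab) b (Set.right_mem_Icc.2 hab) hab
  linarith

section CurvatureConstant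

variable {ℓ : ℝ → ℝ} {x z C : ℝ} {i k : ℕ}

theorem CBound.pos (h : CBound ℓ z C) : 0 < C := one_pos.trans_le h.1

theorem CBound.iteratedDeriv_pos (h : CBound ℓ z C) (hx : x ≤ z) (hi : i ≤ 2) :
    0 < iteratedDeriv i ℓ x :=
  (div_pos_iff_of_pos_left (exp_pos x)).1 ((inv_pos.2 h.pos).trans_le (h.2 x hx i hi).1)

theorem CBound.exp_le_mul_iteratedDeriv (h : CBound ℓ z C) (hx : x ≤ z) (hi : i ≤ 2) :
    exp x ≤ C * iteratedDeriv i ℓ x :=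
  (div_le_iff₀ (h.iteratedDeriv_pos hx hi)).1 (h.2 x hx i hi).2

theorem CBound.iteratedDeriv_le_mul_exp (h : CBound ℓ z C) (hx : x ≤ z) (hi : i ≤ 2) :
    iteratedDeriv i ℓ x ≤ C * exp x :=
  (inv_mul_le_iff₀ h.pos).1 <| (le_div_iff₀ (h.iteratedDeriv_pos hx hi)).1 (h.2 x hx i hi).1

theorem CBound.iteratedDeriv_le_sq_mul_iteratedDeriv (h : CBound ℓ z C) (hx : x ≤ z)
    (hi : i ≤ 2) (hk : k ≤ 2) : iteratedDeriv i ℓ x ≤ C ^ 2 * iteratedDeriv k ℓ x :=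
  calc
    iteratedDeriv i ℓ x ≤ C * exp x := h.iteratedDeriv_le_mul_exp hx hi
    _ ≤ C * (C * iteratedDeriv k ℓ x) :=
      mul_le_mul_of_nonneg_left (h.exp_le_mul_iteratedDeriv hx hk) h.pos.le
    _ = C ^ 2 * iteratedDeriv k ℓ x := by ring

theorem cBound_Cconst (h : ∃ C, CBound ℓ z C) : CBound ℓ z (Cconst ℓ z) := by
  obtain ⟨C₀, hC₀⟩ := id h
  have one_le : 1 ≤ Cconst ℓ z := le_csInf h fun C hC => hC.1
  refine ⟨one_le, fun x hx i hi => ⟨?_, le_csInf h fun C hC => (hC.2 x hx i hi).2⟩⟩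
  have ratio_pos : 0 < exp x / iteratedDeriv i ℓ x :=
    div_pos (exp_pos x) (hC₀.iteratedDeriv_pos hx hi)
  rw [inv_le_comm₀ (one_pos.trans_le one_le) ratio_pos]
  exact le_csInf h fun C hC => (inv_le_comm₀ hC.pos ratio_pos).1 (hC.2 x hx i hi).1

end CurvatureConstant

section Loss

variable {ℓ : ℝ → ℝ}

theorem MemL.pos (hℓ : MemL ℓ) (x : ℝ) : 0 < ℓ x := hℓ.1 x

theorem MemL.contDiff (hℓ : MemL ℓ) : ContDiff ℝ 2 ℓ := hℓ.2.1

theorem MemL.convexOn (hℓ : MemL ℓ) : ConvexOn ℝ Set.univ ℓ := hℓ.2.2.1.convexOn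

theorem MemL.cBound_Cconst (hℓ : MemL ℓ) (z : ℝ) : CBound ℓ z (Cconst ℓ z) :=
  _root_.cBound_Cconst (hℓ.2.2.2 z)

theorem MemL.differentiable (hℓ : MemL ℓ) : Differentiable ℝ ℓ :=
  hℓ.contDiff.differentiable two_ne_zero

theorem MemL.deriv_pos (hℓ : MemL ℓ) (x : ℝ) : 0 < deriv ℓ x := by
  simpa only [iteratedDeriv_one] using
    (hℓ.cBound_Cconst x).iteratedDeriv_pos le_rfl one_le_two

theorem MemL.strictMono (hℓ : MemL ℓ) : StrictMono ℓ := strictMono_of_deriv_pos hℓ.deriv_pos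

theorem MemL.tendsto_atBot (hℓ : MemL ℓ) : Filter.Tendsto ℓ Filter.atBot (nhds 0) := by
  have hupper : ∀ᶠ x in Filter.atBot, ℓ x ≤ Cconst ℓ 0 * exp x := by
    filter_upwards [Filter.eventually_le_atBot 0] with x hx
    simpa only [iteratedDeriv_zero] using
      (hℓ.cBound_Cconst 0).iteratedDeriv_le_mul_exp hx zero_le_two
  have hexp : Filter.Tendsto (fun x => Cconst ℓ 0 * exp x) Filter.atBot (nhds 0) := by
    simpa only [mul_zero] using tendsto_exp_atBot.const_mul (Cconst ℓ 0)
  exact squeeze_zero' (.of_forall fun x => (hℓ.pos x).le) hupper hexp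

theorem MemL.tendsto_atTop (hℓ : MemL ℓ) : Filter.Tendsto ℓ Filter.atTop Filter.atTop := by
  have htangent : ∀ᶠ x in Filter.atTop, ℓ 0 + deriv ℓ 0 * x ≤ ℓ x := by
    filter_upwards [Filter.eventually_gt_atTop 0] with x hx
    have hslope := hℓ.convexOn.le_slope_of_hasDerivAt (Set.mem_univ 0) (Set.mem_univ x) hx
      (hℓ.differentiable 0).hasDerivAt
    rw [slope_def_field, sub_zero, le_div_iff₀ hx] at hslope
    linarith
  exact Filter.tendsto_atTop_mono' _ htangent <|
    Filter.tendsto_atTop_add_const_left _ _ (Filter.tendsto_id.const_mul_atTop (hℓ.deriv_pos 0))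

theorem MemL.apply_invFun (hℓ : MemL ℓ) {y : ℝ} (hy : 0 < y) : ℓ (Function.invFun ℓ y) = y := by
  obtain ⟨a, ha⟩ := (hℓ.tendsto_atBot.eventually_le_const hy).exists
  obtain ⟨b, hb⟩ := (hℓ.tendsto_atTop.eventually_ge_atTop y).exists
  exact Function.invFun_eq <|
    mem_range_of_exists_le_of_exists_ge hℓ.differentiable.continuous ⟨a, ha⟩ ⟨b, hb⟩

end Loss

section RiskAlongLine

variable {ι : Type*} [Fintype ι] {ℓ : ℝ → ℝ} {x u : ι → ℝ} {z C t α : ℝ}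

theorem MemL.le_of_sum_le (hℓ : MemL ℓ) (h : ∑ i, ℓ (x i) ≤ ℓ z) (i : ι) : x i ≤ z :=
  hℓ.strictMono.le_iff_le.1 <|
    (single_le_sum (f := fun i => ℓ (x i)) (fun _ _ => (hℓ.pos _).le) (mem_univ i)).trans h

/-- The `k`-th derivative of the unnormalized risk `t ↦ ∑ i, ℓ (x i + t * u i)` along the line
through `x` with direction `u`, in explicit form; for `x = Aλ` and `u = Av`, the case `k = 0` is
`m · L(A(λ + t v))`. -/
def lineRisk (ℓ : ℝ → ℝ) (k : ℕ) (x u : ι → ℝ) (t : ℝ) : ℝ :=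
  ∑ i, u i ^ k * iteratedDeriv k ℓ (x i + t * u i)

theorem lineRisk_zero (ℓ : ℝ → ℝ) (x u : ι → ℝ) :
    lineRisk ℓ 0 x u = fun t => ∑ i, ℓ (x i + t * u i) := by
  simp [lineRisk, funext_iff]

theorem hasDerivAt_lineRisk {N k : ℕ} (hℓ : ContDiff ℝ N ℓ) (hk : k < N) (x u : ι → ℝ) (t : ℝ) :
    HasDerivAt (lineRisk ℓ k x u) (lineRisk ℓ (k + 1) x u t) t := by
  refine HasDerivAt.fun_sum fun i _ => ?_
  have hline : HasDerivAt (fun t => x i + t * u i) (u i) t :=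
    (hasDerivAt_mul_const (u i)).const_add (x i)
  have hderiv : HasDerivAt (iteratedDeriv k ℓ) (iteratedDeriv (k + 1) ℓ (x i + t * u i))
      (x i + t * u i) := by
    rw [iteratedDeriv_succ]
    exact (hℓ.differentiable_iteratedDeriv k (mod_cast hk) _).hasDerivAt
  exact ((hderiv.comp t hline).const_mul (u i ^ k)).congr_deriv (by ring)

theorem convexOn_lineRisk_zero (hℓ : ConvexOn ℝ Set.univ ℓ) (x u : ι → ℝ) :
    ConvexOn ℝ Set.univ (lineRisk ℓ 0 x u) := by
  refine ⟨convex_univ, fun s _ t _ a b ha hb hab => ?_⟩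
  simp only [lineRisk_zero, smul_sum, ← sum_add_distrib]
  refine sum_le_sum fun i _ => ?_
  have hline : x i + (a • s + b • t) * u i = a • (x i + s * u i) + b • (x i + t * u i) := by
    simp only [smul_eq_mul]
    linear_combination -(x i) * hab
  rw [hline]
  exact hℓ.2 (Set.mem_univ _) (Set.mem_univ _) ha hb hab

theorem CBound.lineRisk_two_le (h : CBound ℓ z C) (hu : ∀ i, |u i| ≤ 1)
    (hz : ∀ i, x i + t * u i ≤ z) : lineRisk ℓ 2 x u t ≤ C ^ 2 * lineRisk ℓ 0 x u t := by
  rw [lineRisk, lineRisk, mul_sum]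
  refine sum_le_sum fun i _ => ?_
  calc
    u i ^ 2 * iteratedDeriv 2 ℓ (x i + t * u i) ≤ iteratedDeriv 2 ℓ (x i + t * u i) :=
      mul_le_of_le_one_left (h.iteratedDeriv_pos (hz i) le_rfl).le
        ((sq_le_one_iff_abs_le_one _).2 (hu i))
    _ ≤ C ^ 2 * iteratedDeriv 0 ℓ (x i + t * u i) :=
      h.iteratedDeriv_le_sq_mul_iteratedDeriv (hz i) le_rfl zero_le_two
    _ = C ^ 2 * (u i ^ 0 * iteratedDeriv 0 ℓ (x i + t * u i)) := by rw [pow_zero, one_mul]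

theorem CBound.sum_le_sq_mul_sum_deriv (h : CBound ℓ z C) (hz : ∀ i, x i ≤ z) :
    ∑ i, ℓ (x i) ≤ C ^ 2 * ∑ i, deriv ℓ (x i) := by
  rw [mul_sum]
  refine sum_le_sum fun i _ => ?_
  simpa only [iteratedDeriv_zero, iteratedDeriv_one] using
    h.iteratedDeriv_le_sq_mul_iteratedDeriv (hz i) zero_le_two one_le_two

theorem MemL.lineRisk_two_le (hℓ : MemL ℓ) (hu : ∀ i, |u i| ≤ 1) (hz : ∑ i, ℓ (x i) ≤ ℓ z)
    (ht : lineRisk ℓ 0 x u t ≤ lineRisk ℓ 0 x u 0) :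
    lineRisk ℓ 2 x u t ≤ Cconst ℓ z ^ 4 * ∑ i, deriv ℓ (x i) := by
  have hC := hℓ.cBound_Cconst z
  simp only [lineRisk_zero, zero_mul, add_zero] at ht
  calc
    lineRisk ℓ 2 x u t ≤ Cconst ℓ z ^ 2 * lineRisk ℓ 0 x u t :=
      hC.lineRisk_two_le hu (hℓ.le_of_sum_le (ht.trans hz))
    _ ≤ Cconst ℓ z ^ 2 * ∑ i, ℓ (x i) := by
      simpa only [lineRisk_zero] using mul_le_mul_of_nonneg_left ht (sq_nonneg _)
    _ ≤ Cconst ℓ z ^ 2 * (Cconst ℓ z ^ 2 * ∑ i, deriv ℓ (x i)) :=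
      mul_le_mul_of_nonneg_left (hC.sum_le_sq_mul_sum_deriv (hℓ.le_of_sum_le hz)) (sq_nonneg _)
    _ = Cconst ℓ z ^ 4 * ∑ i, deriv ℓ (x i) := by ring

theorem MemL.neg_lineRisk_one_le (hℓ : MemL ℓ) (hu : ∀ i, |u i| ≤ 1)
    (hz : ∑ i, ℓ (x i) ≤ ℓ z) (hα : 0 ≤ α)
    (hmin : IsMinOn (lineRisk ℓ 0 x u) (Set.Ici 0) α) :
    -lineRisk ℓ 1 x u 0 ≤ Cconst ℓ z ^ 4 * (∑ i, deriv ℓ (x i)) * α := by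
  have hderiv : ∀ k < 2, ∀ t, HasDerivAt (lineRisk ℓ k x u) (lineRisk ℓ (k + 1) x u t) t :=
    fun _ hk => hasDerivAt_lineRisk hℓ.contDiff hk x u
  have hle : ∀ t ∈ Set.Icc 0 α, lineRisk ℓ 0 x u t ≤ lineRisk ℓ 0 x u 0 := fun t ht =>
    ((convexOn_lineRisk_zero hℓ.convexOn x u).le_max_of_mem_Icc (Set.mem_univ 0)
      (Set.mem_univ α) ht).trans (max_le le_rfl (hmin Set.self_mem_Ici))
  simpa only [sub_zero] using
    neg_deriv_le_mul_of_isMinOn_Ici hα (hderiv 0 two_pos α) (fun t _ => hderiv 1 one_lt_two t)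
      (fun t ht => hℓ.lineRisk_two_le hu hz (hle t ht)) hmin

end RiskAlongLine

theorem LL_add_smul (ℓ : ℝ → ℝ) (A : Matrix (Fin m) (Fin n) ℝ) (lam v : Fin n → ℝ) (t : ℝ) :
    LL ℓ A (lam + t • v) = lineRisk ℓ 0 (A.mulVec lam) (A.mulVec v) t / m := by
  simp [LL, lineRisk_zero, Matrix.mulVec_add, Matrix.mulVec_smul]

theorem sum_gradL_mul_mulVec (ℓ : ℝ → ℝ) (A : Matrix (Fin m) (Fin n) ℝ) (lam v : Fin n → ℝ) :
    ∑ i, gradL ℓ A lam i * A.mulVec v i = lineRisk ℓ 1 (A.mulVec lam) (A.mulVec v) 0 / m := by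
  rw [lineRisk, sum_div]
  refine sum_congr rfl fun i _ => ?_
  rw [gradL, zero_mul, add_zero, pow_one, iteratedDeriv_one]
  ring

theorem MemL.gOne_eq {ℓ : ℝ → ℝ} (hℓ : MemL ℓ) (A : Matrix (Fin m) (Fin n) ℝ)
    (lam : Fin n → ℝ) : gOne ℓ A lam = (∑ i, deriv ℓ (A.mulVec lam i)) / m := by
  rw [gOne, sum_div]
  exact sum_congr rfl fun i _ => abs_of_nonneg (div_nonneg (hℓ.deriv_pos _).le m.cast_nonneg)

theorem abs_mulVec_smul_single (A : Matrix (Fin m) (Fin n) ℝ) (s : ℝ) (i : Fin m) (j : Fin n) :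
    |A.mulVec (s • Pi.single j 1) i| = |s| * |A i j| := by
  simp [Matrix.mulVec_smul, abs_mul]

theorem qub_le_opt_general (hm : 0 < m) (A : Matrix (Fin m) (Fin n) ℝ) {ℓ : ℝ → ℝ}
    (hℓ : MemL ℓ) (lam : Fin n → ℝ) {v : Fin n → ℝ} (hv : ∀ i, |A.mulVec v i| ≤ 1) {α : ℝ}
    (hα : 0 ≤ α) (hmin : IsMinOn (fun β : ℝ => LL ℓ A (lam + β • v)) (Set.Ici 0) α) :
    -(∑ i, gradL ℓ A lam i * A.mulVec v i) / gOne ℓ A lam / Cstep ℓ A lam ^ 4 ≤ α := by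
  have : Nonempty (Fin m) := ⟨⟨0, hm⟩⟩
  have hm' : (0 : ℝ) < m := mod_cast hm
  have hmL : m * LL ℓ A lam = ∑ i, ℓ (A.mulVec lam i) := mul_div_cancel₀ _ hm'.ne'
  have hz : ∑ i, ℓ (A.mulVec lam i) = ℓ (Function.invFun ℓ (m * LL ℓ A lam)) := by
    rw [hmL, hℓ.apply_invFun (sum_pos (fun i _ => hℓ.pos _) univ_nonempty)]
  have hmin' : IsMinOn (lineRisk ℓ 0 (A.mulVec lam) (A.mulVec v)) (Set.Ici 0) α := fun β hβ => by
    simpa [LL_add_smul, div_le_div_iff_of_pos_right hm'] using hmin hβ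
  have hslope : -lineRisk ℓ 1 (A.mulVec lam) (A.mulVec v) 0 ≤
      Cstep ℓ A lam ^ 4 * (∑ i, deriv ℓ (A.mulVec lam i)) * α :=
    hℓ.neg_lineRisk_one_le hv hz.le hα hmin'
  have hC : 0 < Cstep ℓ A lam := (hℓ.cBound_Cconst _).pos
  have hgrad : 0 < ∑ i, deriv ℓ (A.mulVec lam i) :=
    sum_pos (fun i _ => hℓ.deriv_pos _) univ_nonempty
  rw [sum_gradL_mul_mulVec, hℓ.gOne_eq, ← neg_div, div_div_div_cancel_right₀ hm'.ne', div_div,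
    div_le_iff₀ (by positivity)]
  linarith

/-- the optimal step dominates the quadratic-upper-bound step:
`γ̂/C⁴ ≤ α*`, hence `ν·γ̂/C⁴ ≤ ν·α*` for any shrinkage `ν ∈ (0,1]`. -/
theorem qub_le_opt {m n : ℕ} (hm : 0 < m) (hn : 0 < n)
    (A : Matrix (Fin m) (Fin n) ℝ) (hA : ∀ i j, |A i j| ≤ 1)
    (ℓ : ℝ → ℝ) (hℓ : MemL ℓ)
    (lam : Fin n → ℝ) (s : ℝ) (hs : s = 1 ∨ s = -1) (j : Fin n)
    (v : Fin n → ℝ) (hv : v = s • (Pi.single j (1:ℝ) : Fin n → ℝ))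
    (hvgrad : ∑ i, gradL ℓ A lam i * A.mulVec v i = - gInf ℓ A lam)
    (αs : ℝ) (hαs : 0 ≤ αs)
    (hmin : ∀ β : ℝ, LL ℓ A (lam + αs • v) ≤ LL ℓ A (lam + β • v))
    (ν : ℝ) (hν : ν ∈ Set.Ioc (0:ℝ) 1) :
    gammaHat ℓ A lam / (Cstep ℓ A lam)^4 ≤ αs ∧
    ν * (gammaHat ℓ A lam / (Cstep ℓ A lam)^4) ≤ ν * αs := by
  have hAv : ∀ i, |A.mulVec v i| ≤ 1 := fun i => by
    rw [hv, abs_mulVec_smul_single, (abs_eq zero_le_one).2 hs, one_mul]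
    exact hA i j
  have hstep : gammaHat ℓ A lam / Cstep ℓ A lam ^ 4 ≤ αs := by
    simpa only [gammaHat, hvgrad, neg_neg] using
      qub_le_opt_general hm A hℓ lam hAv hαs fun β _ => hmin β
  exact ⟨hstep, mul_le_mul_of_nonneg_left hstep hν.1.le⟩
end
end

section
/- Let ℓ = exp (so that C_t = 1 for all t), let ν ∈ (0,1], assume γ_i < 1 for every i ≥ 1, and let {λ_t} be boosting iterates with the AdaBoost steps α_i = α_ada_i := (ν/2)·ln((1+γ_i)/(1−γ_i)). Then for all integers t > t₀ ≥ 0: L(Aλ_t) ≤ L(Aλ_{t₀})·Π_{i=t₀+1}^{t} (1 − (ν/2)·γ_i²). -/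
open Real Finset

noncomputable section

variable {m n : ℕ}

/-!
A step of size `ν * artanh γ` along a direction `v` with `|(A v)ᵢ| ≤ 1` and edge at least `γ`
multiplies the exponential risk by at most `cosh a - γ * sinh a` at `a = ν * artanh γ`, because
`exp (a * s) ≤ cosh a + s * sinh a` for `|s| ≤ 1`. This factor is convex in `a`, equals `1` at
`a = 0` and `√(1 - γ ^ 2) ≤ 1 - γ ^ 2 / 2` at `a = artanh γ`; interpolating gives
`1 - ν / 2 * γ ^ 2`. The AdaBoost step is of this form since
`artanh γ = (1 / 2) * log ((1 + γ) / (1 - γ))`.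
-/

theorem le_mul_prod_Icc_of_le_mul {R : Type*} [CommSemiring R] [PartialOrder R]
    [IsOrderedRing R] {u c : ℕ → R} {k l : ℕ} (hkl : k ≤ l) (hc : ∀ i ∈ Icc (k + 1) l, 0 ≤ c i)
    (hu : ∀ i ∈ Icc (k + 1) l, u i ≤ u (i - 1) * c i) :
    u l ≤ u k * ∏ i ∈ Icc (k + 1) l, c i := by
  induction l, hkl using Nat.le_induction with
  | base => simp
  | succ l hkl ih =>
    have hsub : Icc (k + 1) l ⊆ Icc (k + 1) (l + 1) := Icc_subset_Icc_right l.le_succ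
    have htop : l + 1 ∈ Icc (k + 1) (l + 1) := right_mem_Icc.2 (by lia)
    calc u (l + 1) ≤ u l * c (l + 1) := hu _ htop
      _ ≤ (u k * ∏ i ∈ Icc (k + 1) l, c i) * c (l + 1) :=
        mul_le_mul_of_nonneg_right
          (ih (fun i hi ↦ hc i (hsub hi)) fun i hi ↦ hu i (hsub hi)) (hc _ htop)
      _ = u k * ∏ i ∈ Icc (k + 1) (l + 1), c i := by
        rw [prod_Icc_succ_top (by lia), mul_assoc]

theorem convexOn_cosh_sub_mul_sinh {c : ℝ} (hc : |c| ≤ 1) :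
    ConvexOn ℝ Set.univ fun x ↦ cosh x - c * sinh x := by
  obtain ⟨hc_lower, hc_upper⟩ := abs_le.1 hc
  have hexp_neg : ConvexOn ℝ Set.univ fun x : ℝ ↦ exp (-x) :=
    convexOn_exp.comp_linearMap (-LinearMap.id)
  have hsum := (convexOn_exp.smul (by linarith : 0 ≤ (1 - c) / 2)).add
    (hexp_neg.smul (by linarith : 0 ≤ (1 + c) / 2))
  refine hsum.congr fun x _ ↦ ?_
  simp only [Pi.add_apply, smul_eq_mul, cosh_eq, sinh_eq]
  ring

theorem cosh_artanh_sub_mul_sinh_artanh {γ : ℝ} (hγ : γ ∈ Set.Ioo (-1) 1) :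
    cosh (artanh γ) - γ * sinh (artanh γ) = √(1 - γ ^ 2) := by
  rw [cosh_artanh hγ, sinh_artanh hγ, ← mul_div_assoc, ← sub_div, ← sq, div_sqrt]

theorem cosh_sub_mul_sinh_mul_artanh_le {ν γ : ℝ} (hν : ν ∈ Set.Icc 0 1)
    (hγ : γ ∈ Set.Ioo (-1) 1) :
    cosh (ν * artanh γ) - γ * sinh (ν * artanh γ) ≤ 1 - ν / 2 * γ ^ 2 := by
  have hγ_abs : |γ| < 1 := abs_lt.2 hγ
  have hinterp := (convexOn_cosh_sub_mul_sinh hγ_abs.le).2 (Set.mem_univ (artanh γ))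
    (Set.mem_univ 0) hν.1 (sub_nonneg.2 hν.2) (add_sub_cancel ν 1)
  have hsqrt : √(1 - γ ^ 2) ≤ 1 - γ ^ 2 / 2 := by
    have hγ_sq : γ ^ 2 < 1 := (sq_lt_one_iff_abs_lt_one γ).2 hγ_abs
    simpa [← sub_eq_add_neg, neg_div] using sqrt_one_add_le (neg_le_neg hγ_sq.le)
  calc cosh (ν * artanh γ) - γ * sinh (ν * artanh γ)
      ≤ ν * (cosh (artanh γ) - γ * sinh (artanh γ)) + (1 - ν) := by simpa using hinterp
    _ = ν * √(1 - γ ^ 2) + (1 - ν) := by rw [cosh_artanh_sub_mul_sinh_artanh hγ]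
    _ ≤ ν * (1 - γ ^ 2 / 2) + (1 - ν) := by gcongr; exact hν.1
    _ = 1 - ν / 2 * γ ^ 2 := by ring

theorem mul_artanh_eq_half_mul_log (ν : ℝ) {γ : ℝ} (hγ : γ ∈ Set.Icc (-1) 1) :
    ν * artanh γ = ν / 2 * log ((1 + γ) / (1 - γ)) := by
  rw [artanh_eq_half_log hγ]
  ring

section Risk

variable (ℓ : ℝ → ℝ) (A : Matrix (Fin m) (Fin n) ℝ)

/-- The edge of the direction `v` at `x`: the rate `-∇L(Ax)ᵀAv` at which the risk decreases along
`v`, normalised by `‖∇L(Ax)‖₁`. The largest edge of a signed coordinate direction is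
`gammaHat ℓ A x`. -/
def edge (x v : Fin n → ℝ) : ℝ :=
  -(∑ i, gradL ℓ A x i * A.mulVec v i) / gOne ℓ A x

theorem gammaHat_nonneg (x : Fin n → ℝ) : 0 ≤ gammaHat ℓ A x :=
  div_nonneg (Real.iSup_nonneg fun _ ↦ abs_nonneg _) (sum_nonneg fun _ _ ↦ abs_nonneg _)

theorem LL_exp_nonneg (x : Fin n → ℝ) : 0 ≤ LL exp A x := by
  unfold LL
  positivity

theorem LL_exp_pos (hm : 0 < m) (x : Fin n → ℝ) : 0 < LL exp A x := by
  have : Nonempty (Fin m) := ⟨⟨0, hm⟩⟩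
  unfold LL
  positivity

theorem gOne_exp (x : Fin n → ℝ) : gOne exp A x = LL exp A x := by
  simp only [gOne, gradL, LL, Real.deriv_exp, abs_div, abs_exp, Nat.abs_cast, sum_div]

variable {A}

theorem LL_exp_add_smul_le {v : Fin n → ℝ} (hv : ∀ i, |A.mulVec v i| ≤ 1) (x : Fin n → ℝ)
    (a : ℝ) :
    LL exp A (x + a • v) ≤
      LL exp A x * cosh a + (∑ i, gradL exp A x i * A.mulVec v i) * sinh a := by
  have hterm (i : Fin m) : exp (A.mulVec (x + a • v) i) ≤
      exp (A.mulVec x i) * (cosh a + A.mulVec v i * sinh a) := by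
    rw [Matrix.mulVec_add, Matrix.mulVec_smul, Pi.add_apply, Pi.smul_apply, smul_eq_mul, exp_add,
      mul_comm a]
    gcongr
    exact exp_mul_le_cosh_add_mul_sinh (hv i) a
  calc LL exp A (x + a • v)
      ≤ (∑ i, exp (A.mulVec x i) * (cosh a + A.mulVec v i * sinh a)) / m := by
        unfold LL
        gcongr with i
        exact hterm i
    _ = LL exp A x * cosh a + (∑ i, gradL exp A x i * A.mulVec v i) * sinh a := by
        simp only [LL, gradL, Real.deriv_exp, sum_div, sum_mul, ← sum_add_distrib]
        exact sum_congr rfl fun i _ ↦ by ring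

theorem LL_exp_add_mul_artanh_smul_le (hm : 0 < m) {ν γ : ℝ} (hν : ν ∈ Set.Icc 0 1)
    (hγ : γ ∈ Set.Ico 0 1) {x v : Fin n → ℝ} (hv : ∀ i, |A.mulVec v i| ≤ 1)
    (hedge : γ ≤ edge exp A x v) :
    LL exp A (x + (ν * artanh γ) • v) ≤ LL exp A x * (1 - ν / 2 * γ ^ 2) := by
  set a := ν * artanh γ
  have hsinh : 0 ≤ sinh a := sinh_nonneg_iff.2 (mul_nonneg hν.1 (artanh_nonneg hγ.1))
  have hdescent : ∑ i, gradL exp A x i * A.mulVec v i ≤ -(γ * LL exp A x) := by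
    rwa [edge, gOne_exp, le_div_iff₀ (LL_exp_pos A hm x), le_neg] at hedge
  calc LL exp A (x + a • v)
      ≤ LL exp A x * cosh a + (∑ i, gradL exp A x i * A.mulVec v i) * sinh a :=
        LL_exp_add_smul_le hv x a
    _ ≤ LL exp A x * cosh a + -(γ * LL exp A x) * sinh a := by gcongr
    _ = LL exp A x * (cosh a - γ * sinh a) := by ring
    _ ≤ LL exp A x * (1 - ν / 2 * γ ^ 2) :=
        mul_le_mul_of_nonneg_left
          (cosh_sub_mul_sinh_mul_artanh_le hν ⟨neg_one_lt_zero.trans_le hγ.1, hγ.2⟩)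
          (LL_exp_nonneg A x)

end Risk

namespace IsBoostSeq

variable {ℓ : ℝ → ℝ} {A : Matrix (Fin m) (Fin n) ℝ} {lam : ℕ → Fin n → ℝ} {α : ℕ → ℝ}
  {v : ℕ → Fin n → ℝ}

theorem abs_mulVec_le_one (hseq : IsBoostSeq ℓ A lam α v) (hA : ∀ i j, |A i j| ≤ 1) {t : ℕ}
    (ht : 1 ≤ t) (i : Fin m) : |A.mulVec (v t) i| ≤ 1 := by
  obtain ⟨s, hs, j, hv⟩ := hseq.2.2.1 t ht
  rw [hv, Matrix.mulVec_smul]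
  rcases hs with rfl | rfl <;> simpa using hA i j

theorem edge_eq_gammaHat (hseq : IsBoostSeq ℓ A lam α v) {t : ℕ} (ht : 1 ≤ t) :
    edge ℓ A (lam (t - 1)) (v t) = gammaHat ℓ A (lam (t - 1)) := by
  rw [edge, hseq.2.2.2 t ht, neg_neg, gammaHat]

end IsBoostSeq

theorem risk_conv_ada_exp_general (hm : 0 < m) {A : Matrix (Fin m) (Fin n) ℝ} {ν : ℝ}
    (hν : ν ∈ Set.Icc 0 1) {lam v : ℕ → Fin n → ℝ} {γ : ℕ → ℝ} {t₀ t : ℕ} (ht : t₀ ≤ t)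
    (hγ : ∀ i ∈ Icc (t₀ + 1) t, γ i ∈ Set.Ico 0 1)
    (hv : ∀ i ∈ Icc (t₀ + 1) t, ∀ k, |A.mulVec (v i) k| ≤ 1)
    (hedge : ∀ i ∈ Icc (t₀ + 1) t, γ i ≤ edge exp A (lam (i - 1)) (v i))
    (hlam : ∀ i ∈ Icc (t₀ + 1) t, lam i = lam (i - 1) + (ν * artanh (γ i)) • v i) :
    LL exp A (lam t) ≤ LL exp A (lam t₀) * ∏ i ∈ Icc (t₀ + 1) t, (1 - ν / 2 * γ i ^ 2) := by
  refine le_mul_prod_Icc_of_le_mul (u := fun i ↦ LL exp A (lam i)) ht (fun i hi ↦ ?_)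
    fun i hi ↦ ?_
  · have hγ_sq : γ i ^ 2 ≤ 1 := pow_le_one₀ (hγ i hi).1 (hγ i hi).2.le
    nlinarith [hν.1, hν.2]
  · rw [hlam i hi]
    exact LL_exp_add_mul_artanh_smul_le hm hν (hγ i hi) (hv i hi) (hedge i hi)

/-- risk convergence for AdaBoost steps with the exponential loss. -/
theorem risk_conv_ada_exp {m n : ℕ} (hm : 0 < m) (hn : 0 < n)
    (A : Matrix (Fin m) (Fin n) ℝ) (hA : ∀ i j, |A i j| ≤ 1)
    (ν : ℝ) (hν : ν ∈ Set.Ioc (0:ℝ) 1)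
    (lam : ℕ → Fin n → ℝ) (α : ℕ → ℝ) (v : ℕ → Fin n → ℝ)
    (hseq : IsBoostSeq Real.exp A lam α v)
    (hγ : ∀ i : ℕ, 1 ≤ i → gammaHat Real.exp A (lam (i-1)) < 1)
    (hstep : ∀ i : ℕ, 1 ≤ i →
      α i = (ν/2) * Real.log
        ((1 + gammaHat Real.exp A (lam (i-1))) / (1 - gammaHat Real.exp A (lam (i-1)))))
    (t₀ t : ℕ) (ht : t₀ < t) :
    LL Real.exp A (lam t) ≤ LL Real.exp A (lam t₀) *
      ∏ i ∈ Finset.Icc (t₀+1) t, (1 - (ν/2) * (gammaHat Real.exp A (lam (i-1)))^2) := by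
  have hpos (i : ℕ) (hi : i ∈ Icc (t₀ + 1) t) : 1 ≤ i := by grind
  have hγ_nonneg (i : ℕ) : 0 ≤ gammaHat exp A (lam (i - 1)) := gammaHat_nonneg exp A _
  refine risk_conv_ada_exp_general hm ⟨hν.1.le, hν.2⟩ ht.le
    (fun i hi ↦ ⟨hγ_nonneg i, hγ i (hpos i hi)⟩)
    (fun i hi ↦ hseq.abs_mulVec_le_one hA (hpos i hi))
    (fun i hi ↦ (hseq.edge_eq_gammaHat (hpos i hi)).ge) fun i hi ↦ ?_
  rw [hseq.2.1 i (hpos i hi), hstep i (hpos i hi), mul_artanh_eq_half_mul_log]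
  exact ⟨neg_one_lt_zero.le.trans (hγ_nonneg i), (hγ i (hpos i hi)).le⟩
end
end
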